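/- arXiv:1307.2427 — 3 statements merged into one kernel-verified Lean document; each statement's English description precedes it below -/
import Mathlib

section
/- Let N = (P, T, Pre, Post) be a strongly connected state machine with m = |P| ≥ 1 places, and let M₀ be a marking with Σ_{p∈P} M₀(p) = k. Then the number of reachable markings is |R(N, M₀)| = C(m + k − 1, m − 1) (the binomial coefficient). -/
open scoped Classical BigOperators

/-- One firing step of a Petri net with incidence functions `Pre`, `Post`:
some enabled transition `t` fires, yielding `M' = M + Post(·,t) − Pre(·,t)`. -/
def fireStep {P T : Type} (Pre Post : P → T → ℕ) (M M' : P → ℕ) : Prop :=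
  ∃ t : T, (∀ p, Pre p t ≤ M p) ∧ M' = fun p => M p + Post p t - Pre p t

/-- Reachability via finite firing sequences. -/
def reach {P T : Type} (Pre Post : P → T → ℕ) (M0 M : P → ℕ) : Prop :=
  Relation.ReflTransGen (fireStep Pre Post) M0 M

/-- Firing a transition of a state machine moves one token from its input to its output place. -/
theorem fireStep_iff_single {P T : Type} {Pre Post : P → T → ℕ} {ins outs : T → P}
    (hPre : ∀ p t, Pre p t = if p = ins t then 1 else 0)
    (hPost : ∀ p t, Post p t = if p = outs t then 1 else 0) {M M' : P → ℕ} :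
    fireStep Pre Post M M' ↔
      ∃ (t : T) (A : P → ℕ), M = A + Pi.single (ins t) 1 ∧ M' = A + Pi.single (outs t) 1 := by
  constructor
  · rintro ⟨t, hen, rfl⟩
    refine ⟨t, fun p => M p - Pre p t, funext fun p => ?_, funext fun p => ?_⟩ <;>
    · have := hen p
      simp only [hPre, hPost, Pi.add_apply, Pi.single_apply] at this ⊢
      omega
  · rintro ⟨t, A, rfl, rfl⟩
    refine ⟨t, fun p => ?_, funext fun p => ?_⟩ <;>
    · simp only [hPre, hPost, Pi.add_apply, Pi.single_apply]
      omega

/-- Token conservation in a state machine. -/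
theorem sum_eq_of_reach {P T : Type} [Fintype P] {Pre Post : P → T → ℕ} {ins outs : T → P}
    (hPre : ∀ p t, Pre p t = if p = ins t then 1 else 0)
    (hPost : ∀ p t, Post p t = if p = outs t then 1 else 0) {M M' : P → ℕ}
    (h : reach Pre Post M M') : ∑ p, M' p = ∑ p, M p := by
  induction h with
  | refl => rfl
  | tail _ hstep ih =>
    obtain ⟨t, A, rfl, rfl⟩ := (fireStep_iff_single hPre hPost).1 hstep
    rw [← ih]
    simp [Finset.sum_add_distrib]

/-- A token can be moved along any directed path of the associated graph. -/
theorem reach_add_single {P T : Type} {Pre Post : P → T → ℕ} {ins outs : T → P}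
    (hPre : ∀ p t, Pre p t = if p = ins t then 1 else 0)
    (hPost : ∀ p t, Post p t = if p = outs t then 1 else 0) {p q : P}
    (h : Relation.ReflTransGen (fun a b => ∃ t, ins t = a ∧ outs t = b) p q) (A : P → ℕ) :
    reach Pre Post (A + Pi.single p 1) (A + Pi.single q 1) := by
  refine h.lift (fun x => A + Pi.single x 1) ?_
  rintro _ _ ⟨t, rfl, rfl⟩
  exact (fireStep_iff_single hPre hPost).2 ⟨t, A, rfl, rfl⟩

/-- A marking with a positive number of tokens splits off a token. -/
theorem exists_eq_add_single {P : Type} [Fintype P] {M : P → ℕ} {n : ℕ}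
    (h : ∑ p, M p = n + 1) : ∃ (N : P → ℕ) (p : P), M = N + Pi.single p 1 ∧ ∑ p, N p = n := by
  obtain ⟨p, -, hp⟩ := Finset.exists_ne_zero_of_sum_ne_zero (h.trans_ne n.succ_ne_zero)
  have hM : M = (M - Pi.single p 1) + Pi.single p 1 := by
    funext x
    by_cases hx : x = p
    · subst hx
      simp
      omega
    · simp [hx]
  refine ⟨M - Pi.single p 1, p, hM, ?_⟩
  rw [hM] at h
  simpa [Finset.sum_add_distrib] using h

/-- In a strongly connected state machine, markings with equally many tokens are mutually
reachable, also in the presence of additional tokens `A`. -/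
theorem reach_add_of_sum_eq {P T : Type} [Fintype P] {Pre Post : P → T → ℕ} {ins outs : T → P}
    (hPre : ∀ p t, Pre p t = if p = ins t then 1 else 0)
    (hPost : ∀ p t, Post p t = if p = outs t then 1 else 0)
    (hsc : ∀ p p' : P,
      Relation.ReflTransGen (fun a b => ∃ t, ins t = a ∧ outs t = b) p p')
    {n : ℕ} {M M' : P → ℕ} (hM : ∑ p, M p = n) (hM' : ∑ p, M' p = n) (A : P → ℕ) :
    reach Pre Post (A + M) (A + M') := by
  induction n generalizing M M' A with
  | zero =>
    have : M = M' := funext fun p => by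
      rw [Finset.sum_eq_zero_iff.1 hM p (Finset.mem_univ p),
        Finset.sum_eq_zero_iff.1 hM' p (Finset.mem_univ p)]
    rw [this]
    exact Relation.ReflTransGen.refl
  | succ n ih =>
    obtain ⟨N, p, rfl, hN⟩ := exists_eq_add_single hM
    obtain ⟨N', q, rfl, hN'⟩ := exists_eq_add_single hM'
    have hmove := reach_add_single hPre hPost (hsc p q) (A + N)
    have hrest := ih hN hN' (A + Pi.single q 1)
    rw [add_right_comm, add_right_comm A _ N'] at hrest
    rw [← add_assoc, ← add_assoc]
    exact Relation.ReflTransGen.trans hmove hrest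

/-- The number of markings of a nonempty finite set of places with `k` tokens in total. -/
theorem ncard_sum_eq (P : Type) [Fintype P] [Nonempty P] (k : ℕ) :
    {M : P → ℕ | ∑ p, M p = k}.ncard =
      (Fintype.card P + k - 1).choose (Fintype.card P - 1) := by
  rw [← Nat.card_coe_set_eq, Set.coe_ofPred, ← Nat.card_congr (Sym.equivNatSumOfFintype P k),
    Nat.card_eq_fintype_card, Sym.card_sym_eq_choose]
  have := Fintype.card_pos (α := P)
  exact Nat.choose_symm_of_eq_add (by omega)

/-- For a strongly connected state machine with `m ≥ 1` places and `k` tokens, the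
number of reachable markings is the binomial coefficient `C(m + k − 1, m − 1)`. -/
theorem card_reach_set {P T : Type} [Fintype P] [Fintype T] [Nonempty P]
    (Pre Post : P → T → ℕ) (ins outs : T → P)
    (hPre : ∀ p t, Pre p t = if p = ins t then 1 else 0)
    (hPost : ∀ p t, Post p t = if p = outs t then 1 else 0)
    (hsc : ∀ p p' : P,
      Relation.ReflTransGen (fun a b => ∃ t, ins t = a ∧ outs t = b) p p')
    (M0 : P → ℕ) (k : ℕ) (hk : ∑ p : P, M0 p = k) :
    {M : P → ℕ | reach Pre Post M0 M}.ncard =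
      (Fintype.card P + k - 1).choose (Fintype.card P - 1) := by
  have hset : {M : P → ℕ | reach Pre Post M0 M} = {M : P → ℕ | ∑ p, M p = k} := by
    ext M
    refine ⟨fun h => (sum_eq_of_reach hPre hPost h).trans hk, fun h => ?_⟩
    simpa using reach_add_of_sum_eq hPre hPost hsc hk h 0
  rw [hset, ncard_sum_eq]
end

section
/- Let ⟨N, E, f⟩ be a deterministic, strongly connected synchronized state machine containing k tokens, let σ = t₁ … t_r be a synchronizing transition sequence for P and p̄ ∈ P, and let w = f(t₁) … f(t_r). Then w^k (the word w concatenated k times) is a k-SS moving all tokens to p̄: for every marking M with Σ_{p∈P} M(p) = k it holds M →(w^k) M̄, where M̄(p̄) = k and M̄(p) = 0 for p ≠ p̄. -/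
open scoped Classical BigOperators

/-- A synchronized Petri net `⟨N, E, f⟩`: `Pre`/`Post` incidence functions
and a labeling `f` of transitions by input events. -/
structure SyncPN (P T E : Type) where
  Pre : P → T → ℕ
  Post : P → T → ℕ
  f : T → E

/-- A transition `t` is enabled at marking `M` if `M(p) ≥ Pre(p,t)` for all `p`. -/
def enabled {P T E : Type} (N : SyncPN P T E) (M : P → ℕ) (t : T) : Prop :=
  ∀ p, N.Pre p t ≤ M p

/-- Occurrence of input event `e` at marking `M`: all enabled transitions labeled `e`
fire simultaneously: `step M e (p) = M(p) + Σ Post(p,t) − Σ Pre(p,t)`,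
the sums ranging over enabled transitions labeled `e`. -/
noncomputable def step {P T E : Type} [Fintype T] (N : SyncPN P T E) (M : P → ℕ)
    (e : E) : P → ℕ := fun p =>
  M p + (∑ t : T, if N.f t = e ∧ enabled N M t then N.Post p t else 0)
      - ∑ t : T, if N.f t = e ∧ enabled N M t then N.Pre p t else 0

/-- Extension of `step` to input words: `M →w stepWord N M w`. -/
noncomputable def stepWord {P T E : Type} [Fintype T] (N : SyncPN P T E) (M : P → ℕ)
    (w : List E) : P → ℕ :=
  w.foldl (step N) M

/-- A net is deterministic if no place has two distinct output transitions
sharing the same label. -/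
def deterministic {P T E : Type} (N : SyncPN P T E) : Prop :=
  ∀ (p : P) (t t' : T), t ≠ t' → 1 ≤ N.Pre p t → 1 ≤ N.Pre p t' → N.f t ≠ N.f t'

/-- A state machine: each transition `t` has single input place `ins t`
and single output place `outs t`, with arc weight 1. -/
def isSM {P T E : Type} (N : SyncPN P T E) (ins outs : T → P) : Prop :=
  (∀ p t, N.Pre p t = if p = ins t then 1 else 0) ∧
  (∀ p t, N.Post p t = if p = outs t then 1 else 0)

/-- Strong connectedness of the associated graph of a state machine
(an arc from `ins t` to `outs t` for each transition `t`). -/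
def stronglyConnected {P T : Type} (ins outs : T → P) : Prop :=
  ∀ p p' : P, Relation.ReflTransGen (fun a b => ∃ t, ins t = a ∧ outs t = b) p p'

section StateMachine

variable {P T E : Type} {N : SyncPN P T E} {ins outs : T → P}

theorem isSM.enabled_iff (hSM : isSM N ins outs) (M : P → ℕ) (t : T) :
    enabled N M t ↔ 1 ≤ M (ins t) := by
  refine ⟨fun h => by simpa [hSM.1] using h (ins t), fun h p => ?_⟩
  rw [hSM.1]
  split_ifs with hp
  · exact hp ▸ h
  · exact Nat.zero_le _

variable [Fintype T]

/-- The tokens that event `e` removes from a place are available there. -/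
theorem sum_pre_le (hSM : isSM N ins outs) (hdet : deterministic N) (M : P → ℕ) (e : E) (p : P) :
    (∑ t : T, if N.f t = e ∧ enabled N M t then N.Pre p t else 0) ≤ M p := by
  by_cases h : ∃ t, N.f t = e ∧ enabled N M t ∧ p = ins t
  · obtain ⟨t, hte, ht, rfl⟩ := h
    rw [Finset.sum_eq_single t]
    · rw [if_pos ⟨hte, ht⟩]
      exact ht _
    · intro t' _ hne
      split_ifs with h'
      · rw [hSM.1]
        split_ifs with hp
        · refine absurd (h'.1.trans hte.symm) (hdet (ins t) t' t hne ?_ ?_)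
          · simp [hSM.1, hp]
          · simp [hSM.1]
        · rfl
      · rfl
    · simp
  · rw [Finset.sum_eq_zero]
    · exact Nat.zero_le _
    · intro t _
      split_ifs with h'
      · rw [hSM.1, if_neg fun hp => h ⟨t, h'.1, h'.2, hp⟩]
      · rfl

theorem step_add_sum_pre (hSM : isSM N ins outs) (hdet : deterministic N) (M : P → ℕ) (e : E)
    (p : P) :
    step N M e p + (∑ t : T, if N.f t = e ∧ enabled N M t then N.Pre p t else 0) =
      M p + ∑ t : T, if N.f t = e ∧ enabled N M t then N.Post p t else 0 :=
  Nat.sub_add_cancel (le_add_right (sum_pre_le hSM hdet M e p))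

theorem sum_step [Fintype P] (hSM : isSM N ins outs) (hdet : deterministic N) (M : P → ℕ)
    (e : E) : ∑ p, step N M e p = ∑ p, M p := by
  have h := Finset.sum_congr (rfl : (Finset.univ : Finset P) = Finset.univ)
    fun p _ => step_add_sum_pre hSM hdet M e p
  rw [Finset.sum_add_distrib, Finset.sum_add_distrib, Finset.sum_comm,
    Finset.sum_comm (f := fun p t => if N.f t = e ∧ enabled N M t then N.Post p t else 0)] at h
  have heq : ∀ t : T, (∑ p, if N.f t = e ∧ enabled N M t then N.Pre p t else 0) =
      ∑ p, if N.f t = e ∧ enabled N M t then N.Post p t else 0 := by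
    intro t
    split_ifs <;> simp [hSM.1, hSM.2]
  rw [Finset.sum_congr rfl fun t _ => heq t] at h
  exact Nat.add_right_cancel h

theorem sum_stepWord [Fintype P] (hSM : isSM N ins outs) (hdet : deterministic N) (M : P → ℕ)
    (w : List E) : ∑ p, stepWord N M w p = ∑ p, M p := by
  induction w generalizing M with
  | nil => rfl
  | cons e w ih => exact (ih (step N M e)).trans (sum_step hSM hdet M e)

theorem sum_pre_eq_zero (hSM : isSM N ins outs) (M : P → ℕ) {e : E} {p : P}
    (hp : ∀ t, N.f t = e → ins t ≠ p) :
    (∑ t : T, if N.f t = e ∧ enabled N M t then N.Pre p t else 0) = 0 := by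
  refine Finset.sum_eq_zero fun t _ => ?_
  split_ifs with h
  · rw [hSM.1, if_neg (hp t h.1).symm]
  · rfl

theorem one_le_sum_post (hSM : isSM N ins outs) {M : P → ℕ} {t : T} (ht : 1 ≤ M (ins t)) :
    1 ≤ ∑ t' : T, if N.f t' = N.f t ∧ enabled N M t' then N.Post (outs t) t' else 0 := by
  refine le_trans ?_ (Finset.single_le_sum (fun _ _ => Nat.zero_le _) (Finset.mem_univ t))
  rw [if_pos ⟨rfl, (hSM.enabled_iff M t).2 ht⟩, hSM.2, if_pos rfl]

/-- A place without an output transition labeled `e` loses no token at event `e`. -/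
theorem le_step (hSM : isSM N ins outs) (hdet : deterministic N) (M : P → ℕ) {e : E} {p : P}
    (hp : ∀ t, N.f t = e → ins t ≠ p) : M p ≤ step N M e p := by
  have h := step_add_sum_pre hSM hdet M e p
  rw [sum_pre_eq_zero hSM M hp] at h
  omega

theorem one_le_step_outs (hSM : isSM N ins outs) (hdet : deterministic N) {M : P → ℕ} {t : T}
    (ht : 1 ≤ M (ins t)) : 1 ≤ step N M (N.f t) (outs t) := by
  have h := step_add_sum_pre hSM hdet M (N.f t) (outs t)
  have h₁ := sum_pre_le hSM hdet M (N.f t) (outs t)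
  have h₂ := one_le_sum_post hSM ht
  omega

theorem succ_le_step_outs (hSM : isSM N ins outs) (hdet : deterministic N) {M : P → ℕ} {t : T}
    (ht : 1 ≤ M (ins t)) (hp : ∀ t', N.f t' = N.f t → ins t' ≠ outs t) :
    M (outs t) + 1 ≤ step N M (N.f t) (outs t) := by
  have h := step_add_sum_pre hSM hdet M (N.f t) (outs t)
  rw [sum_pre_eq_zero hSM M hp] at h
  have h₂ := one_le_sum_post hSM ht
  omega

theorem stepWord_append (M : P → ℕ) (v w : List E) :
    stepWord N M (v ++ w) = stepWord N (stepWord N M v) w :=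
  List.foldl_append

theorem stepWord_labels_succ (M : P → ℕ) (ts : ℕ → T) (j : ℕ) :
    stepWord N M ((List.range (j + 1)).map fun i => N.f (ts i)) =
      step N (stepWord N M ((List.range j).map fun i => N.f (ts i))) (N.f (ts j)) := by
  rw [List.range_succ, List.map_append, stepWord_append]
  rfl

/-- A place without output transitions labeled by a letter of the word loses no token. -/
theorem le_stepWord (hSM : isSM N ins outs) (hdet : deterministic N) (M : P → ℕ) {w : List E}
    {p : P} (hp : ∀ t, N.f t ∈ w → ins t ≠ p) : M p ≤ stepWord N M w p := by
  induction w generalizing M with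
  | nil => exact le_rfl
  | cons e w ih =>
    exact (le_step hSM hdet M fun t ht => hp t (ht ▸ List.mem_cons_self)).trans
      (ih _ fun t ht => hp t (List.mem_cons_of_mem _ ht))

/-- Reading the word of a synchronizing transition sequence from a marking with a token outside
`pbar` brings a new token to `pbar`. -/
theorem succ_le_stepWord_of_token (hSM : isSM N ins outs) (hdet : deterministic N)
    {r : ℕ} {ps : ℕ → P} {ts : ℕ → T} {pbar : P}
    (hpath : ∀ i < r, ins (ts i) = ps i ∧ outs (ts i) = ps (i + 1))
    (hvisit : ∀ p : P, ∃ i ≤ r, ps i = p)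
    (hend : ps r = pbar)
    (hnotbar : ∀ i < r, ps i ≠ pbar)
    (hC1 : ∀ t' : T, (∀ i < r, ts i ≠ t') → ∀ i < r, N.f t' ≠ N.f (ts i))
    (hC2 : ∀ i k, i < k → k ≤ r → ps i = ps k →
      ∀ j, j + 1 < k → N.f (ts j) ≠ N.f (ts (k - 1)))
    {M : P → ℕ} {q₀ : P} (hq₀ : q₀ ≠ pbar) (hM : 1 ≤ M q₀) :
    M pbar + 1 ≤ stepWord N M ((List.range r).map fun i => N.f (ts i)) pbar := by
  have hsame : ∀ t, ∀ j < r, N.f t = N.f (ts j) → ∃ n < r, ts n = t := by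
    intro t j hj h
    by_contra! hne
    exact hC1 t hne j hj h
  have hbar : ∀ t, ∀ j < r, N.f t = N.f (ts j) → ins t ≠ pbar := by
    intro t j hj h
    obtain ⟨n, hn, rfl⟩ := hsame t j hj h
    rw [(hpath n hn).1]
    exact hnotbar n hn
  -- After `j` letters, the followed token is at `ps j` or at a place not visited before time `j`.
  have key : ∀ j ≤ r,
      M pbar + 1 ≤ stepWord N M ((List.range j).map fun i => N.f (ts i)) pbar ∨
      ∃ q, q ≠ pbar ∧ 1 ≤ stepWord N M ((List.range j).map fun i => N.f (ts i)) q ∧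
        (q = ps j ∨ ∀ m < j, ps m ≠ q) := by
    intro j
    induction j with
    | zero => exact fun _ => Or.inr ⟨q₀, hq₀, hM, Or.inr fun m hm => absurd hm (Nat.not_lt_zero m)⟩
    | succ j ih =>
      intro hj
      have hmono : M pbar ≤ stepWord N M ((List.range j).map fun i => N.f (ts i)) pbar := by
        refine le_stepWord hSM hdet M fun t ht => ?_
        obtain ⟨i, hi, hti⟩ := List.mem_map.1 ht
        exact hbar t i (lt_trans (List.mem_range.1 hi) hj) hti.symm
      rw [stepWord_labels_succ]
      generalize stepWord N M ((List.range j).map fun i => N.f (ts i)) = M' at ih hmono ⊢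
      have hbarj : ∀ t, N.f t = N.f (ts j) → ins t ≠ pbar := fun t => hbar t j hj
      -- A token moved along `ts n` either reaches `pbar` or can be followed further.
      have hmove : ∀ n < r, N.f (ts n) = N.f (ts j) → 1 ≤ M' (ps n) →
          (ps (n + 1) = ps (j + 1) ∨ ∀ m < j + 1, ps m ≠ ps (n + 1)) →
          M pbar + 1 ≤ step N M' (N.f (ts j)) pbar ∨
          ∃ q, q ≠ pbar ∧ 1 ≤ step N M' (N.f (ts j)) q ∧
            (q = ps (j + 1) ∨ ∀ m < j + 1, ps m ≠ q) := by
        intro n hn hlab htok hpos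
        rw [← (hpath n hn).1] at htok
        rw [← (hpath n hn).2] at hpos
        rw [← hlab] at hbarj ⊢
        by_cases hout : outs (ts n) = pbar
        · have h := succ_le_step_outs hSM hdet htok (hout ▸ hbarj)
          rw [hout] at h
          exact Or.inl (by omega)
        · exact Or.inr ⟨_, hout, one_le_step_outs hSM hdet htok, hpos⟩
      obtain h | ⟨q, hq, htok, hpos⟩ := ih (by omega)
      · exact Or.inl (h.trans (le_step hSM hdet M' hbarj))
      by_cases hqj : q = ps j
      · exact hmove j hj rfl (hqj ▸ htok) (Or.inl rfl)
      have hnew : ∀ m < j + 1, ps m ≠ q := by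
        intro m hm
        obtain hlt | rfl := Nat.lt_succ_iff_lt_or_eq.1 hm
        · exact hpos.resolve_left hqj m hlt
        · exact Ne.symm hqj
      by_cases ht : ∃ t, N.f t = N.f (ts j) ∧ ins t = q
      · obtain ⟨t, hlab, rfl⟩ := ht
        obtain ⟨n, hn, rfl⟩ := hsame t j hj hlab
        rw [(hpath n hn).1] at htok hnew
        have hjn : j < n := by
          by_contra! hle
          exact hnew n (Nat.lt_succ_of_le hle) rfl
        refine hmove n hn hlab htok (Or.inr fun m hm heq => ?_)
        exact hC2 m (n + 1) (by omega) hn heq j (by omega) hlab.symm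
      · exact Or.inr ⟨q, hq, htok.trans (le_step hSM hdet M' fun t hl hi => ht ⟨t, hl, hi⟩),
          Or.inr hnew⟩
  obtain h | ⟨q, hq, -, hpos⟩ := key r le_rfl
  · exact h
  · obtain ⟨i, hi, rfl⟩ := hvisit q
    have hir : i ≠ r := fun h => hq (h ▸ hend)
    obtain h | h := hpos
    · exact absurd (h.trans hend) hq
    · exact absurd rfl (h i (by omega))

end StateMachine

/-- Proposition 3: if `w` is the label word of a synchronizing transition sequence
for `P` and `p̄`, then `w^k` is a `k`-SS moving all `k` tokens to `p̄`. -/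
theorem STS_gives_k_SS {P T E : Type} [Fintype P] [Fintype T]
    (N : SyncPN P T E) (ins outs : T → P)
    (hSM : isSM N ins outs) (hdet : deterministic N)
    (hsc : stronglyConnected ins outs)
    (r : ℕ) (ps : ℕ → P) (ts : ℕ → T) (pbar : P)
    (hpath : ∀ i < r, ins (ts i) = ps i ∧ outs (ts i) = ps (i + 1))
    (hvisit : ∀ p : P, ∃ i ≤ r, ps i = p)
    (hend : ps r = pbar)
    (hnotbar : ∀ i < r, ps i ≠ pbar)
    (hC1 : ∀ t' : T, (∀ i < r, ts i ≠ t') → ∀ i < r, N.f t' ≠ N.f (ts i))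
    (hC2 : ∀ i k, i < k → k ≤ r → ps i = ps k →
      ∀ j, j + 1 < k → N.f (ts j) ≠ N.f (ts (k - 1)))
    (k : ℕ) :
    ∀ M : P → ℕ, (∑ p : P, M p = k) →
      stepWord N M
          ((List.replicate k ((List.range r).map fun i => N.f (ts i))).flatten) =
        fun p => if p = pbar then k else 0 := by
  intro M hM
  set w := (List.range r).map fun i => N.f (ts i)
  have hround : ∀ M' : P → ℕ, ∑ p, M' p = k → min (M' pbar + 1) k ≤ stepWord N M' w pbar := by
    intro M' hM'
    by_cases htok : ∃ q, q ≠ pbar ∧ 1 ≤ M' q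
    · obtain ⟨q, hq, hq1⟩ := htok
      exact (min_le_left _ _).trans
        (succ_le_stepWord_of_token hSM hdet hpath hvisit hend hnotbar hC1 hC2 hq hq1)
    · push Not at htok
      have hk : M' pbar = k := by
        rw [← hM', Finset.sum_eq_single pbar (fun q _ hq => by have := htok q hq; omega) (by simp)]
      refine (min_le_right _ _).trans (hk ▸ le_stepWord hSM hdet M' fun t ht => ?_)
      obtain ⟨i, hi, hti⟩ := List.mem_map.1 ht
      by_contra hbar
      refine hC1 t (fun n hn h => hnotbar n hn ?_) i (List.mem_range.1 hi) hti.symm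
      rw [← (hpath n hn).1, h, hbar]
  have hrounds : ∀ n, ∀ M' : P → ℕ, ∑ p, M' p = k →
      min (M' pbar + n) k ≤ stepWord N M' (List.replicate n w).flatten pbar := by
    intro n
    induction n with
    | zero => exact fun M' _ => min_le_left _ _
    | succ n ih =>
      intro M' hM'
      rw [List.replicate_succ, List.flatten_cons, stepWord_append]
      have h₁ := hround M' hM'
      have h₂ := ih (stepWord N M' w) ((sum_stepWord hSM hdet M' w).trans hM')
      omega
  have hge := hrounds k M hM
  have hsum := (sum_stepWord hSM hdet M (List.replicate k w).flatten).trans hM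
  generalize stepWord N M (List.replicate k w).flatten = M' at hge hsum ⊢
  rw [← Finset.add_sum_erase _ _ (Finset.mem_univ pbar)] at hsum
  funext p
  split_ifs with hp
  · subst hp
    omega
  · have := Finset.single_le_sum (f := M') (fun _ _ => Nat.zero_le _)
      (Finset.mem_erase.2 ⟨hp, Finset.mem_univ p⟩)
    omega
end

section
/- Let ⟨N, E, f⟩ be a deterministic synchronized Petri net with P = Ps ⊎ Pz and T = Ts ⊎ Tz, such that every t ∈ Ts has exactly one input place ins(t) ∈ Ps and one output place outs(t) ∈ Ps with Pre(ins(t), t) = Post(outs(t), t) = 1 and Pre(p, t) = Post(p, t) = 0 for all other p ∈ Ps, and such that every t ∈ Tz satisfies Pre(p, t) = Post(p, t) = 0 for all p ∈ Ps (condition i). Let Ns be the synchronized state machine with places Ps, transitions Ts, input place ins, output place outs and labeling f restricted to Ts, and let κ ∈ ℕ. Let w̄ ∈ E* be a synchronizing sequence of Ns for target marking M̄s, i.e. Ms →w̄ M̄s in Ns for every marking Ms of Ns with Σ_{p∈Ps} Ms(p) = κ. Suppose condition ii holds for every letter e of w̄: no t ∈ Ts with f(t) = e has an input place in Pz. Then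 for every marking M of N with Σ_{p∈Ps} M(p) = κ, if M →w̄ M' in N then M'(p) = M̄s(p) for all p ∈ Ps. -/
open scoped Classical BigOperators

/-- The synchronized state machine `Ns` induced by a state machine subnet
`(Ps, Ts)` with input place map `ins`, output place map `outs` and labeling `f`. -/
noncomputable def subSM {P T E : Type} (Ps : Finset P) (Ts : Finset T)
    (ins outs : T → P) (f : T → E) :
    SyncPN {p // p ∈ Ps} {t // t ∈ Ts} E where
  Pre := fun q t => if (q : P) = ins t then 1 else 0
  Post := fun q t => if (q : P) = outs t then 1 else 0
  f := fun t => f t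

/-- If weights vanish outside `Ts`, the total weight of the firing transitions can be computed
over the subtype of `Ts`. -/
lemma sum_fired_eq_sum_subtype {T : Type} [Fintype T] (Ts : Finset T) {fires : T → Prop}
    {firesSub : {t // t ∈ Ts} → Prop} {weight : T → ℕ} {weightSub : {t // t ∈ Ts} → ℕ}
    [DecidablePred fires] [DecidablePred firesSub]
    (hfires : ∀ t : {t // t ∈ Ts}, fires t ↔ firesSub t)
    (hweight : ∀ t : {t // t ∈ Ts}, weight t = weightSub t)
    (hzero : ∀ t ∉ Ts, weight t = 0) :
    (∑ t : T, if fires t then weight t else 0) =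
      ∑ t : {t // t ∈ Ts}, if firesSub t then weightSub t else 0 := by
  rw [← Finset.sum_subset (Finset.subset_univ Ts) fun t _ ht => by simp [hzero t ht],
    ← Finset.sum_coe_sort Ts]
  exact Finset.sum_congr rfl fun t _ => by simp only [hfires, hweight]

/-- A transition of the subnet without input places outside `Ps` is enabled in the full net
exactly when it is enabled in the subnet. -/
lemma enabled_iff_enabled_subSM {P T E : Type} (N : SyncPN P T E)
    (Ps : Finset P) (Ts : Finset T) (ins outs : T → P)
    (hPre : ∀ t ∈ Ts, ∀ p ∈ Ps, N.Pre p t = if p = ins t then 1 else 0)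
    (M : P → ℕ) (t : {t // t ∈ Ts}) (ht : ∀ p ∉ Ps, N.Pre p t = 0) :
    enabled N M t ↔ enabled (subSM Ps Ts ins outs N.f) (fun q => M q) t := by
  constructor
  · intro h q
    exact (hPre t t.2 q q.2).symm.trans_le (h q)
  · intro h p
    by_cases hp : p ∈ Ps
    · exact (hPre t t.2 p hp).trans_le (h ⟨p, hp⟩)
    · simp [ht p hp]

/-- Restricting to the places of the subnet commutes with the occurrence of an event `e` whose
subnet transitions have no input place outside `Ps`. -/
lemma step_restrict_eq_step_subSM {P T E : Type} [Fintype T] (N : SyncPN P T E)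
    (Ps : Finset P) (Ts : Finset T) (ins outs : T → P)
    (hPre : ∀ t ∈ Ts, ∀ p ∈ Ps, N.Pre p t = if p = ins t then 1 else 0)
    (hPost : ∀ t ∈ Ts, ∀ p ∈ Ps, N.Post p t = if p = outs t then 1 else 0)
    (hTz : ∀ t ∉ Ts, ∀ p ∈ Ps, N.Pre p t = 0 ∧ N.Post p t = 0)
    (e : E) (he : ∀ t ∈ Ts, N.f t = e → ∀ p ∉ Ps, N.Pre p t = 0) (M : P → ℕ) :
    (fun q : {p // p ∈ Ps} => step N M e q) =
      step (subSM Ps Ts ins outs N.f) (fun q => M q) e := by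
  have hfires : ∀ t : {t // t ∈ Ts}, (N.f t = e ∧ enabled N M t) ↔
      ((subSM Ps Ts ins outs N.f).f t = e ∧
        enabled (subSM Ps Ts ins outs N.f) (fun q => M q) t) := fun t =>
    and_congr_right fun hf =>
      enabled_iff_enabled_subSM N Ps Ts ins outs hPre M t (he t t.2 hf)
  funext q
  unfold step
  rw [sum_fired_eq_sum_subtype Ts hfires (fun t => hPost t t.2 q q.2)
      fun t ht => (hTz t ht q q.2).2,
    sum_fired_eq_sum_subtype Ts hfires (fun t => hPre t t.2 q q.2)
      fun t ht => (hTz t ht q q.2).1]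
  rfl

/-- Restricting to the places of the subnet commutes with the occurrence of a word all of whose
letters label only subnet transitions without input places outside `Ps`. -/
lemma stepWord_restrict_eq_stepWord_subSM {P T E : Type} [Fintype T] (N : SyncPN P T E)
    (Ps : Finset P) (Ts : Finset T) (ins outs : T → P)
    (hPre : ∀ t ∈ Ts, ∀ p ∈ Ps, N.Pre p t = if p = ins t then 1 else 0)
    (hPost : ∀ t ∈ Ts, ∀ p ∈ Ps, N.Post p t = if p = outs t then 1 else 0)
    (hTz : ∀ t ∉ Ts, ∀ p ∈ Ps, N.Pre p t = 0 ∧ N.Post p t = 0)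
    (w : List E) (hw : ∀ e ∈ w, ∀ t ∈ Ts, N.f t = e → ∀ p ∉ Ps, N.Pre p t = 0) (M : P → ℕ) :
    (fun q : {p // p ∈ Ps} => stepWord N M w q) =
      stepWord (subSM Ps Ts ins outs N.f) (fun q => M q) w := by
  induction w generalizing M with
  | nil => rfl
  | cons e w ih =>
    have hstep := step_restrict_eq_step_subSM N Ps Ts ins outs hPre hPost hTz e
      (hw e List.mem_cons_self) M
    have htail := ih (fun e' he' => hw e' (List.mem_cons_of_mem e he')) (step N M e)
    rw [hstep] at htail
    exact htail

/-- Proposition 7: a synchronizing sequence `w̄` of a state machine subnet `Ns`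
(for token count `κ` and target marking `M̄s`), all of whose letters satisfy
condition ii), drives the full net `N` to a marking that agrees with `M̄s` on
the places of the subnet. -/
theorem subnet_SS_synchronizes {P T E : Type} [Fintype P] [Fintype T]
    (N : SyncPN P T E) (hdet : deterministic N)
    (Ps : Finset P) (Ts : Finset T) (ins outs : T → P)
    (hin : ∀ t ∈ Ts, ins t ∈ Ps)
    (hout : ∀ t ∈ Ts, outs t ∈ Ps)
    (hPre : ∀ t ∈ Ts, ∀ p ∈ Ps, N.Pre p t = if p = ins t then 1 else 0)
    (hPost : ∀ t ∈ Ts, ∀ p ∈ Ps, N.Post p t = if p = outs t then 1 else 0)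
    (hTz : ∀ t ∉ Ts, ∀ p ∈ Ps, N.Pre p t = 0 ∧ N.Post p t = 0)
    (κ : ℕ) (wbar : List E) (Mbars : {p // p ∈ Ps} → ℕ)
    (hSS : ∀ Ms : {p // p ∈ Ps} → ℕ, (∑ q, Ms q = κ) →
      stepWord (subSM Ps Ts ins outs N.f) Ms wbar = Mbars)
    (hii : ∀ e ∈ wbar, ∀ t ∈ Ts, N.f t = e → ∀ p ∉ Ps, N.Pre p t = 0) :
    ∀ M : P → ℕ, (∑ p ∈ Ps, M p = κ) →
      ∀ M' : P → ℕ, stepWord N M wbar = M' →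
        ∀ (p : P) (hp : p ∈ Ps), M' p = Mbars ⟨p, hp⟩ := by
  rintro M hM M' rfl p hp
  have hword := stepWord_restrict_eq_stepWord_subSM N Ps Ts ins outs hPre hPost hTz wbar hii M
  rw [hSS _ ((Finset.sum_coe_sort Ps M).trans hM)] at hword
  exact congrFun hword ⟨p, hp⟩
end
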